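/- If there exists k₀ ≥ 1 such that the reflected shifted sequence (1−η_{k₀+1}, 1−η_{k₀+2}, 1−η_{k₀+3}, …) is lexicographically greater than (η_1, η_2, η_3, …), then the quasi-greedy orbit of 1 hits the interior of the switch region, i.e. there exists n ≥ 1 with Q^n(1) ∈ (1/β, 1/(β(β−1))). -/

import Mathlib

/-- The value `Σ_{n≥1} a_n β^{-n}` of a digit sequence (indexed from 0, so `a i = a_{i+1}`). -/
noncomputable def betaVal (β : ℝ) (a : ℕ → ℕ) : ℝ := ∑' n : ℕ, (a n : ℝ) / β ^ (n + 1)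

/-- `Ũ_β`: the set of 0-1 sequences that are the unique β-expansion of their value. -/
def UTilde (β : ℝ) : Set (ℕ → ℕ) :=
  {a | (∀ n, a n ≤ 1) ∧
    ∀ b : ℕ → ℕ, (∀ n, b n ≤ 1) → betaVal β b = betaVal β a → b = a}

/-- The word `w` occurs in the sequence `x` starting at position `n`. -/
def OccursAt (w : List ℕ) (x : ℕ → ℕ) (n : ℕ) : Prop :=
  ∀ i : Fin w.length, x (n + i.1) = w.get i

/-- `Y` is a subshift of finite type inside the ambient full shift `{0,1}^ℕ`: there is a
finite set `F` of forbidden words such that `Y` consists exactly of the 0-1 sequences in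
which no word of `F` occurs. -/
def IsSFT01 (Y : Set (ℕ → ℕ)) : Prop :=
  ∃ F : Set (List ℕ), F.Finite ∧
    Y = {x | (∀ n, x n ≤ 1) ∧ ∀ w ∈ F, ∀ n, ¬ OccursAt w x n}

/-- Strict lexicographic order on sequences. -/
def LexLt (a b : ℕ → ℕ) : Prop :=
  ∃ n, (∀ k < n, a k = b k) ∧ a n < b n

/-- `η` is the quasi-greedy expansion of `1` in base `β`: the lexicographically largest
0-1 sequence with infinitely many digits `1` whose value is `1`. -/
def QuasiGreedy (β : ℝ) (η : ℕ → ℕ) : Prop :=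
  (∀ n, η n ≤ 1) ∧ (∀ N, ∃ n ≥ N, η n = 1) ∧ betaVal β η = 1 ∧
    ∀ ζ : ℕ → ℕ, (∀ n, ζ n ≤ 1) → (∀ N, ∃ n ≥ N, ζ n = 1) →
      betaVal β ζ = 1 → ζ ≠ η → LexLt ζ η

theorem bv_summable {β : ℝ} (hβ : 1 < β) (a : ℕ → ℕ) (ha : ∀ n, a n ≤ 1) :
    Summable (fun n : ℕ => (a n : ℝ) / β ^ (n + 1)) := by
  have h0 : (0:ℝ) < β := by linarith
  have hg : Summable (fun n : ℕ => (1 / β) ^ n) :=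
    summable_geometric_of_lt_one (by positivity) (by rw [div_lt_one h0]; exact hβ)
  refine Summable.of_nonneg_of_le (fun n => by positivity) (fun n => ?_) hg
  have h1 : (a n : ℝ) ≤ 1 := by exact_mod_cast ha n
  rw [div_pow, one_pow]
  have h2 : β ^ n ≤ β ^ (n+1) := pow_le_pow_right₀ hβ.le (by omega)
  gcongr

theorem bv_cons {β : ℝ} (hβ : 1 < β) (a : ℕ → ℕ) (ha : ∀ n, a n ≤ 1) :
    betaVal β (fun k => a (k + 1)) = β * betaVal β a - a 0 := by
  have h0 : (0:ℝ) < β := by linarith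
  unfold betaVal
  rw [(bv_summable hβ a ha).tsum_eq_zero_add, mul_add, ← tsum_mul_left]
  have : ∀ b : ℕ, β * ((a (b+1) : ℝ) / β ^ (b + 1 + 1)) = (a (b+1) : ℝ) / β ^ (b+1) := by
    intro b; field_simp; ring
  simp only [this]
  field_simp
  simp
  ring

theorem bv_nonneg {β : ℝ} (hβ : 1 < β) (a : ℕ → ℕ) : 0 ≤ betaVal β a :=
  tsum_nonneg (fun n => by positivity)

theorem bv_pos {β : ℝ} (hβ : 1 < β) (a : ℕ → ℕ) (ha : ∀ n, a n ≤ 1) (n : ℕ) (hn : a n = 1) :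
    0 < betaVal β a :=
  (bv_summable hβ a ha).tsum_pos (fun n => by positivity) n (by rw [hn]; positivity)

theorem bv_le {β : ℝ} (hβ : 1 < β) (a : ℕ → ℕ) (ha : ∀ n, a n ≤ 1) :
    betaVal β a ≤ 1 / (β - 1) := by
  have h1 := bv_cons hβ (fun _ => 1) (fun _ => le_refl _)
  have h2 : betaVal β (fun _ => 1) = 1 / (β - 1) := by
    rw [eq_div_iff (by linarith)]
    push_cast at h1
    linarith
  rw [← h2]
  refine (bv_summable hβ a ha).tsum_le_tsum (fun n => ?_) (bv_summable hβ _ (fun _ => le_refl _))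
  have h1 : a n ≤ 1 := ha n
  have : 0 < β := by linarith
  gcongr

/-- values agree after equal initial digits -/
theorem bv_concat {β : ℝ} (hβ : 1 < β) (n : ℕ) : ∀ (a b : ℕ → ℕ), (∀ n, a n ≤ 1) →
    (∀ n, b n ≤ 1) → (∀ i < n, a i = b i) →
    betaVal β (fun k => a (k + n)) = betaVal β (fun k => b (k + n)) →
    betaVal β a = betaVal β b := by
  induction n with
  | zero => intro a b _ _ _ h; exact h
  | succ n ih =>
    intro a b ha hb hab h
    have := ih (fun k => a (k+1)) (fun k => b (k+1)) (fun _ => ha _) (fun _ => hb _)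
      (fun i hi => hab _ (by omega)) h
    rw [bv_cons hβ a ha, bv_cons hβ b hb, hab 0 (by omega)] at this
    have h0 : β ≠ 0 := by linarith
    exact mul_left_cancel₀ h0 (by linarith)

/-- a bounded remainder orbit determines the value -/
theorem bv_of_orbit {β : ℝ} (hβ : 1 < β) (d : ℕ → ℕ) (hd : ∀ n, d n ≤ 1) (r : ℕ → ℝ)
    (C : ℝ) (hr : ∀ n, r (n+1) = β * r n - d n) (hC : ∀ n, 0 ≤ r n ∧ r n ≤ C) :
    betaVal β d = r 0 := by
  have key : ∀ n, betaVal β (fun k => d (k + n)) - r n = β ^ n * (betaVal β d - r 0) := by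
    intro n
    induction n with
    | zero => simp
    | succ n ih =>
      have := bv_cons hβ (fun k => d (k + n)) (fun _ => hd _)
      have e : (fun k => d (k + (n+1))) = (fun k => d (k + 1 + n)) := by
        funext k; congr 1; omega
      rw [e, this, hr, pow_succ]
      simp only [zero_add]
      linear_combination β * ih
  by_contra hne
  have hpos : 0 < |betaVal β d - r 0| := abs_pos.mpr (sub_ne_zero.mpr hne)
  obtain ⟨n, hn⟩ := pow_unbounded_of_one_lt ((1/(β-1) + C) / |betaVal β d - r 0|) hβ
  rw [div_lt_iff₀ hpos] at hn
  have h1 : |betaVal β (fun k => d (k + n)) - r n| = β ^ n * |betaVal β d - r 0| := by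
    rw [key, abs_mul, abs_of_pos (by positivity)]
  have h2 := bv_le hβ (fun k => d (k+n)) (fun _ => hd _)
  have h3 := bv_nonneg hβ (fun k => d (k+n))
  have h4 := hC n
  have h5 : 0 < 1/(β-1) := by apply div_pos <;> linarith
  have : |betaVal β (fun k => d (k + n)) - r n| ≤ 1/(β-1) + C := by
    rw [abs_le]; constructor <;> linarith
  linarith

theorem exists_exp {β : ℝ} (hβ : 1 < β) (hβ2 : β < 2) (x : ℝ) (hx : 0 < x)
    (hx2 : x ≤ 1 / (β - 1)) :
    ∃ d : ℕ → ℕ, (∀ n, d n ≤ 1) ∧ (∀ N, ∃ n ≥ N, d n = 1) ∧ betaVal β d = x := by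
  classical
  let r : ℕ → ℝ := fun n => Nat.rec x (fun _ y => if 1 < β * y then β * y - 1 else β * y) n
  let d : ℕ → ℕ := fun n => if 1 < β * r n then 1 else 0
  have hr : ∀ n, r (n+1) = β * r n - d n := by
    intro n
    have : r (n+1) = if 1 < β * r n then β * r n - 1 else β * r n := rfl
    rw [this]; simp only [d]; split_ifs <;> simp
  have hd : ∀ n, d n ≤ 1 := by intro n; simp only [d]; split_ifs <;> simp
  have hb : (0:ℝ) < β - 1 := by linarith
  have hC : ∀ n, 0 < r n ∧ r n ≤ 1 / (β - 1) := by
    intro n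
    induction n with
    | zero => exact ⟨hx, hx2⟩
    | succ n ih =>
      obtain ⟨h1, h2⟩ := ih
      rw [le_div_iff₀ hb] at h2 ⊢
      rw [hr]
      simp only [d]
      split_ifs with h
      · push_cast
        constructor
        · linarith
        · nlinarith
      · push_cast
        constructor
        · have : 0 < β * r n := by positivity
          linarith
        · push Not at h
          nlinarith
  refine ⟨d, hd, ?_, bv_of_orbit hβ d hd r _ hr (fun n => ⟨(hC n).1.le, (hC n).2⟩)⟩
  intro N
  by_contra hcon
  push Not at hcon
  have hz : ∀ n ≥ N, d n = 0 := by
    intro n hn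
    have := hcon n hn
    have := hd n
    omega
  have h := bv_of_orbit hβ (fun k => d (k + N)) (fun _ => hd _) (fun k => r (k + N)) _
    (fun n => by
      have := hr (n + N)
      have e : n + 1 + N = n + N + 1 := by omega
      simp only [e]; exact this) (fun n => ⟨(hC _).1.le, (hC _).2⟩)
  have e : (fun k => d (k+N)) = fun _ => 0 := by funext k; exact hz _ (by omega)
  rw [e] at h
  have h2 := (hC N).1
  simp [betaVal] at h
  linarith

/-- a digit `0` of the quasi-greedy expansion forces the orbit point to be at most `1/β` -/
theorem qg_zero {β : ℝ} (hβ : 1 < β) (hβ2 : β < 2) (η : ℕ → ℕ) (hη : QuasiGreedy β η)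
    (n : ℕ) (hn : η n = 0) : β * betaVal β (fun k => η (k + n)) ≤ 1 := by
  obtain ⟨hd, hinf, hone, hmax⟩ := hη
  by_contra hcon
  push Not at hcon
  have hc := bv_cons hβ (fun k => η (k + n)) (fun _ => hd _)
  simp only [zero_add, hn, Nat.cast_zero, sub_zero] at hc
  have hle := bv_le hβ (fun k => η (k + 1 + n)) (fun _ => hd _)
  obtain ⟨d, hd1, hd2, hd3⟩ := exists_exp hβ hβ2 (β * betaVal β (fun k => η (k + n)) - 1)
    (by linarith) (by linarith)
  let ζ : ℕ → ℕ := fun i => if i < n then η i else if i = n then 1 else d (i - (n+1))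
  have hζ : ∀ i, ζ i ≤ 1 := by
    intro i; simp only [ζ]; split_ifs
    · exact hd i
    · exact le_refl _
    · exact hd1 _
  have hζlt : ∀ i < n, ζ i = η i := by
    intro i hi; simp only [ζ]; rw [if_pos hi]
  have hζn : ζ n = 1 := by simp [ζ]
  have hζgt : ∀ k, ζ (k + 1 + n) = d k := by
    intro k; simp only [ζ]
    rw [if_neg (by omega), if_neg (by omega)]; congr 1; omega
  have hval : betaVal β ζ = betaVal β η := by
    refine bv_concat hβ n ζ η hζ hd hζlt ?_
    have h := bv_cons hβ (fun k => ζ (k + n)) (fun _ => hζ _)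
    simp only [zero_add, hζn, hζgt, Nat.cast_one] at h
    have h0 : β ≠ 0 := by linarith
    have h' : betaVal β d = β * betaVal β (fun k => ζ (k + n)) - 1 := h
    exact mul_left_cancel₀ h0 (by linarith)
  have hne : ζ ≠ η := by
    intro h; rw [h] at hζn; omega
  obtain ⟨m, hm1, hm2⟩ := hmax ζ hζ (by
    intro N
    obtain ⟨k, hk, hk1⟩ := hd2 N
    exact ⟨k + 1 + n, by omega, by rw [hζgt, hk1]⟩) (by rw [hval, hone]) hne
  rcases lt_trichotomy m n with h | h | h
  · rw [hζlt m h] at hm2; omega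
  · subst h; omega
  · have := hm1 n h; omega

theorem statement17 (β : ℝ) (hβ : β ∈ Set.Ioo (1 : ℝ) 2)
    (η : ℕ → ℕ) (hη : QuasiGreedy β η)
    (Q : ℕ → ℝ) (hQ : ∀ n, Q n = betaVal β (fun k => η (n + k)))
    (hlex : ∃ k₀ ≥ 1, LexLt η (fun n => 1 - η (n + k₀))) :
    ∃ n ≥ 1, Q n ∈ Set.Ioo (1 / β) (1 / (β * (β - 1))) := by
  obtain ⟨h1, h2⟩ := hβ
  have hz := qg_zero h1 h2 η hη
  obtain ⟨hd, hinf, hone, -⟩ := hη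
  have hQ' : ∀ n, Q n = betaVal β (fun k => η (k + n)) := by
    intro n; rw [hQ]; congr 1; funext k; rw [add_comm]
  simp only [← hQ'] at hz
  have hrec : ∀ n, Q (n+1) = β * Q n - η n := by
    intro n
    have h := bv_cons h1 (fun k => η (k + n)) (fun _ => hd _)
    simp only [zero_add, ← hQ'] at h
    rw [← h, hQ']; congr 1; funext k; congr 1; omega
  have hQ0 : Q 0 = 1 := by rw [hQ']; exact hone
  have hpos : ∀ n, 0 < Q n := by
    intro n
    obtain ⟨m, hm, hm1⟩ := hinf n
    rw [hQ']
    exact bv_pos h1 _ (fun _ => hd _) (m - n) (by rw [← hm1]; congr 1; omega)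
  have hdig : ∀ n, η n = 0 ∨ η n = 1 := by intro n; have := hd n; omega
  have hgt : ∀ n, η n = 1 → 1 < β * Q n := by
    intro n hn
    have a := hpos (n+1)
    rw [hrec, hn] at a
    push_cast at a
    linarith
  have hle1 : ∀ n, Q n ≤ 1 := by
    intro n
    induction n with
    | zero => rw [hQ0]
    | succ n ih =>
      rw [hrec]
      rcases hdig n with h | h
      · rw [h]; have := hz n h; push_cast; linarith
      · rw [h]; push_cast; nlinarith
  have hη0 : η 0 = 1 := by
    rcases hdig 0 with h | h
    · have := hz 0 h; rw [hQ0] at this; linarith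
    · exact h
  have hQ1 : Q 1 = β - 1 := by
    have := hrec 0
    rw [hη0, hQ0] at this
    push_cast at this
    simpa using this
  have hb0 : 0 < β := by linarith
  have hb : 0 < β - 1 := by linarith
  by_contra hcon
  -- a digit 1 forces the orbit to lie right of the switch region
  have hR : ∀ n ≥ 1, η n = 1 → 1 ≤ Q n * (β * (β - 1)) := by
    intro n hn hn1
    by_contra hlt
    push Not at hlt
    refine hcon ⟨n, hn, ?_, ?_⟩
    · rw [div_lt_iff₀ hb0]; linarith [hgt n hn1]
    · rw [lt_div_iff₀ (by positivity)]; exact hlt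
  have hgold : 1 ≤ β * (β - 1) := by
    obtain ⟨m, hm, hm1⟩ := hinf 1
    have a := hR m hm hm1
    have b := hle1 m
    have c : 0 < β * (β - 1) := by positivity
    nlinarith
  have hm : ∀ n, 2 - β ≤ Q (n+1) * (β - 1) := by
    intro n
    induction n with
    | zero => rw [zero_add, hQ1]; nlinarith
    | succ n ih =>
      rw [hrec (n+1)]
      rcases hdig (n+1) with h | h
      · rw [h]; push_cast
        have : 0 < Q (n+1) * (β - 1) * (β - 1) := by have := hpos (n+1); positivity
        nlinarith
      · have := hR (n+1) (by omega) h
        rw [h]; push_cast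
        nlinarith
  obtain ⟨k₀, hk, n, hag, hlt⟩ := hlex
  have hD : ∀ j ≤ n, 1 - (Q (j + k₀) + Q j) * (β - 1) =
      β ^ j * (1 - (Q k₀ + 1) * (β - 1)) := by
    intro j
    induction j with
    | zero => intro _; simp [hQ0]
    | succ j ih =>
      intro hj
      have ih := ih (by omega)
      have e := hag j (by omega)
      have e2 : η j + η (j + k₀) = 1 := by
        have := hd j; have := hd (j + k₀); simp only at e; omega
      have e3 : (η j : ℝ) + η (j + k₀) = 1 := by exact_mod_cast e2
      have r1 := hrec j
      have r2 := hrec (j + k₀)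
      have : j + 1 + k₀ = j + k₀ + 1 := by omega
      rw [this, r1, r2, pow_succ]
      linear_combination β * ih + (β - 1) * e3
  have hDn := hD n le_rfl
  simp only at hlt
  have z1 := hz n (by have := hd n; omega)
  have z2 := hz (n + k₀) (by have := hd (n + k₀); omega)
  have hm0 := hm (k₀ - 1)
  rw [Nat.sub_add_cancel hk] at hm0
  have : β ^ n * (1 - (Q k₀ + 1) * (β - 1)) ≤ 0 :=
    mul_nonpos_of_nonneg_of_nonpos (by positivity) (by linarith)
  have l : 1 ≤ (Q (n + k₀) + Q n) * (β - 1) := by linarith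
  nlinarith
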